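/- (Lemma 3) Let S be a mostly symmetric step set with S(z) = z_d^{-1} A(ẑ) + Q(ẑ) + z_d B(ẑ) and zero drift A(1) = B(1). (i) The polynomial H_3(z,t) = 1 - t z_1···z_d (Q(ẑ) + z_d A(ẑ)) is nonzero whenever |z_j| ≤ 1 for all 1 ≤ j ≤ d and |t| ≤ 1/S(1). (ii) There exist δ_0, ε_0 > 0 such that for all 0 < δ < δ_0 and 0 < ε < ε_0 and every w ∈ Γ, B(ẑ) ≠ 0 for all z ∈ N_w. -/

import Mathlib

open Finset Filter MeasureTheory
open scoped Classical Real

noncomputable section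

/-- Total weight of walks of length `n` with steps in `S` (weighted by `w`),
starting at the origin and never leaving `ℕ^d`. -/
def walkWeight (d : ℕ) (S : Finset (Fin d → ℤ)) (w : (Fin d → ℤ) → ℝ) (n : ℕ) : ℝ :=
  ∑ f : Fin n → {i // i ∈ S},
    if ∀ m : ℕ, m ≤ n → ∀ j : Fin d,
        0 ≤ ∑ k ∈ Finset.univ.filter (fun k : Fin n => (k : ℕ) < m), ((f k : Fin d → ℤ) j)
    then ∏ k : Fin n, w (f k) else 0

/-- The step set `S` (with weights `w`) is symmetric over the `k`-th coordinate axis. -/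
def SymmetricAxis (d : ℕ) (S : Finset (Fin d → ℤ)) (w : (Fin d → ℤ) → ℝ) (k : Fin d) : Prop :=
  ∀ i ∈ S, Function.update i k (-(i k)) ∈ S ∧ w (Function.update i k (-(i k))) = w i

namespace ZeroDrift

variable (d : ℕ) (S : Finset (Fin (d + 1) → ℤ)) (w : (Fin (d + 1) → ℤ) → ℝ)

/-- `S(1)`, the total weight of the step set. -/
def S1 : ℝ := ∑ i ∈ S, w i

/-- `A(ẑ)`: the Laurent polynomial collecting steps with last coordinate `-1`. -/
def AC (z : Fin (d + 1) → ℂ) : ℂ :=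
  ∑ i ∈ S.filter fun i => i (Fin.last d) = -1,
    (w i : ℂ) * ∏ j : Fin d, z (Fin.castSucc j) ^ (i (Fin.castSucc j))

/-- `B(ẑ)`: the Laurent polynomial collecting steps with last coordinate `1`. -/
def BC (z : Fin (d + 1) → ℂ) : ℂ :=
  ∑ i ∈ S.filter fun i => i (Fin.last d) = 1,
    (w i : ℂ) * ∏ j : Fin d, z (Fin.castSucc j) ^ (i (Fin.castSucc j))

/-- `Q(ẑ)`: the Laurent polynomial collecting steps with last coordinate `0`. -/
def QC (z : Fin (d + 1) → ℂ) : ℂ :=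
  ∑ i ∈ S.filter fun i => i (Fin.last d) = 0,
    (w i : ℂ) * ∏ j : Fin d, z (Fin.castSucc j) ^ (i (Fin.castSucc j))

/-- The characteristic Laurent polynomial `S(z)` evaluated at `z : ℂ^{d+1}`. -/
def SC (z : Fin (d + 1) → ℂ) : ℂ :=
  ∑ i ∈ S, (w i : ℂ) * ∏ j : Fin (d + 1), z j ^ (i j)

/-- `S̄(z) = S(z_1,…,z_{d},1/z_{d+1})` evaluated at `z : ℂ^{d+1}`. -/
def SbarC (z : Fin (d + 1) → ℂ) : ℂ :=
  ∑ i ∈ S, (w i : ℂ) *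
    (∏ j : Fin d, z (Fin.castSucc j) ^ (i (Fin.castSucc j))) *
    z (Fin.last d) ^ (-(i (Fin.last d)))

/-- The numerator `G(z,t)` of the diagonal representation. -/
def GC (z : Fin (d + 1) → ℂ) (t : ℂ) : ℂ :=
  (∏ j : Fin d, (1 + z (Fin.castSucc j))) *
    (1 - t * (∏ j, z j) * (QC d S w z + 2 * z (Fin.last d) * AC d S w z))

/-- The denominator `H(z,t) = H_1 H_2 H_3` of the diagonal representation. -/
def HC (z : Fin (d + 1) → ℂ) (t : ℂ) : ℂ :=
  (1 - z (Fin.last d)) * (1 - t * (∏ j, z j) * SbarC d S w z) *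
    (1 - t * (∏ j, z j) * (QC d S w z + z (Fin.last d) * AC d S w z))

/-- The point of `ℂ^{d+1}` with coordinates `i^{m_j}` encoded by `m : Fin (d+1) → Fin 4`. -/
def wOf (m : Fin (d + 1) → Fin 4) : Fin (d + 1) → ℂ :=
  fun j => Complex.I ^ (m j : ℕ)

/-- The (indices of the) finite set `Γ` of possible contributing points: `w_j ∈ {±1}` for
`j ≤ d`, `w_{d+1} ∈ {±1,±i}`, and `|1/(w_1⋯w_{d+1} S(w))| = 1/S(1)`. -/
def GammaIdx : Finset (Fin (d + 1) → Fin 4) :=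
  Finset.univ.filter fun m =>
    (∀ j : Fin d, m (Fin.castSucc j) = 0 ∨ m (Fin.castSucc j) = 2) ∧
    ‖1 / ((∏ j, wOf d m j) * SC d S w (wOf d m))‖ = 1 / S1 d S w

/-- The argument (angle) of the point encoded by `m` in coordinate `j`. -/
def argOf (m : Fin (d + 1) → Fin 4) (j : Fin (d + 1)) : ℝ := (m j : ℕ) * π / 2

/-- The box of angles parametrizing the product of arcs `N_w` for `w = wOf m`. -/
def box (m : Fin (d + 1) → Fin 4) (δ : ℝ) : Set (Fin (d + 1) → ℝ) :=
  Set.univ.pi fun j => Set.Ioo (argOf d m j - δ) (argOf d m j + δ)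

/-- The parametrization of the torus `|z_j| = 1` (`j ≤ d`), `|z_{d+1}| = 1 - ε`. -/
def zOf (ε : ℝ) (θ : Fin (d + 1) → ℝ) : Fin (d + 1) → ℂ :=
  fun j => (if j = Fin.last d then (1 - ε : ℂ) else 1) * Complex.exp (Complex.I * θ j)

/-- Angles parametrizing `N = ⋃_{w ∈ Γ} N_w`. -/
def Nparam (δ : ℝ) : Set (Fin (d + 1) → ℝ) := ⋃ m ∈ GammaIdx d S w, box d m δ

/-- The contour integral `(2πi)^{-(d+2)} ∫_{N × C} G/H · dz dt/(z_1⋯z_{d+1}t)^{n+1}`,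
parametrized by angles, where `C` is the circle `|t| = r`. -/
def fullIntegral (n : ℕ) (ε δ r : ℝ) : ℂ :=
  (((2 * π) ^ (d + 2) : ℝ))⁻¹ •
    ∫ θ in Nparam d S w δ,
      ∫ φ in Set.Ioo 0 (2 * π),
        GC d S w (zOf d ε θ) ((r : ℂ) * Complex.exp (Complex.I * φ)) /
            HC d S w (zOf d ε θ) ((r : ℂ) * Complex.exp (Complex.I * φ)) *
          (((∏ j, zOf d ε θ j) * ((r : ℂ) * Complex.exp (Complex.I * φ))) ^ n)⁻¹

/-- The residue integrand
`[(1+z_1)⋯(1+z_d)/(B(ẑ) z_1⋯z_{d+1})]·[(B(ẑ) - z_{d+1}^2 A(ẑ))/(1-z_{d+1})]·S̄(z)^n`,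
parametrized by angles, including the Jacobian factors `i z_j` of `dz_j`. -/
def resIntegrand (n : ℕ) (ε : ℝ) (θ : Fin (d + 1) → ℝ) : ℂ :=
  ((∏ j : Fin d, (1 + zOf d ε θ (Fin.castSucc j))) /
      (BC d S w (zOf d ε θ) * ∏ j, zOf d ε θ j)) *
    ((BC d S w (zOf d ε θ) - zOf d ε θ (Fin.last d) ^ 2 * AC d S w (zOf d ε θ)) /
      (1 - zOf d ε θ (Fin.last d))) *
    SbarC d S w (zOf d ε θ) ^ n *
    ∏ j, Complex.I * zOf d ε θ j

/-- The contour integral `∫_{N_w} (residue integrand) dz` over the product of arcs `N_w`,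
`w = wOf m`, parametrized by angles. -/
def resIntegral (n : ℕ) (ε δ : ℝ) (m : Fin (d + 1) → Fin 4) : ℂ :=
  ∫ θ in box d m δ, resIntegrand d S w n ε θ

end ZeroDrift

/-!
On the closed polydisc, multiplying by `z_1⋯z_{d+1}` clears the denominators of `Q(ẑ)` and `A(ẑ)`,
so `|z_1⋯z_{d+1} (Q(ẑ) + z_{d+1} A(ẑ))| ≤ Q(1) + A(1)`, which is less than `S(1)` because
`B(1) > 0`. This keeps `H_3` away from zero.

On the unit torus the triangle inequality gives `|S(z)| ≤ |B(ẑ)| + (S(1) - B(1))`. The points of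
`Γ` satisfy `|S(w)| = S(1)`, hence `|B(ŵ)| ≥ B(1) > 0`, and `B` stays nonzero nearby by continuity.
Since `B(ẑ)` does not involve `z_{d+1}`, moving that coordinate off the unit circle changes nothing.
-/

namespace ZeroDrift

section NormBounds

lemma norm_sum_smul_le_sum {ι E : Type*} [SeminormedAddCommGroup E] [NormedSpace ℝ E]
    {T : Finset ι} {c : ι → ℝ} {f : ι → E} (hc : ∀ i ∈ T, 0 ≤ c i) (hf : ∀ i ∈ T, ‖f i‖ ≤ 1) :
    ‖∑ i ∈ T, c i • f i‖ ≤ ∑ i ∈ T, c i := by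
  refine norm_sum_le_of_le T fun i hi => ?_
  rw [norm_smul, Real.norm_of_nonneg (hc i hi)]
  exact mul_le_of_le_one_right (hc i hi) (hf i hi)

lemma norm_mul_zpow_le_one {𝕜 : Type*} [NormedDivisionRing 𝕜] {z : 𝕜} (hz : ‖z‖ ≤ 1) {n : ℤ}
    (hn : -1 ≤ n) : ‖z * z ^ n‖ ≤ 1 := by
  rcases eq_or_ne z 0 with rfl | hz₀
  · simp
  · rw [← zpow_one_add₀ hz₀, norm_zpow]
    exact zpow_le_one₀ (norm_pos_iff.2 hz₀) hz (by lia)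

lemma norm_prod_mul_prod_zpow_le_one {𝕜 ι : Type*} [NormedField 𝕜] {s : Finset ι} {z : ι → 𝕜}
    {n : ι → ℤ} (hz : ∀ j ∈ s, ‖z j‖ ≤ 1) (hn : ∀ j ∈ s, -1 ≤ n j) :
    ‖(∏ j ∈ s, z j) * ∏ j ∈ s, z j ^ n j‖ ≤ 1 := by
  rw [← Finset.prod_mul_distrib, norm_prod]
  exact Finset.prod_le_one (fun _ _ => norm_nonneg _) fun j hj =>
    norm_mul_zpow_le_one (hz j hj) (hn j hj)

lemma one_sub_mul_ne_zero_of_norm_lt {R : Type*} [SeminormedRing R] [NormOneClass R] {t x : R}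
    {c : ℝ} (ht : ‖t‖ ≤ 1 / c) (hx : ‖x‖ < c) : 1 - t * x ≠ 0 := by
  have hc : 0 < c := (norm_nonneg x).trans_lt hx
  intro h
  have : (1 : ℝ) < 1 :=
    calc
      (1 : ℝ) = ‖t * x‖ := by rw [← sub_eq_zero.1 h, norm_one]
      _ ≤ ‖t‖ * ‖x‖ := norm_mul_le t x
      _ ≤ 1 / c * ‖x‖ := by gcongr
      _ < 1 / c * c := by gcongr
      _ = 1 := one_div_mul_cancel hc.ne'
  exact this.false

end NormBounds

section LastCoordinate

variable {d : ℕ} {S : Finset (Fin (d + 1) → ℤ)} {w : (Fin (d + 1) → ℤ) → ℝ}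

variable (S w) in
/-- The coefficient of `z_{d+1}^k` in `S(z)`, a Laurent polynomial in `ẑ = (z_1,…,z_d)`. The
polynomials `A`, `Q` and `B` are, definitionally, the cases `k = -1, 0, 1`; as for them, the last
coordinate of the argument `z` is ignored. -/
def lastCoeff (k : ℤ) (z : Fin (d + 1) → ℂ) : ℂ :=
  ∑ i ∈ S with i (Fin.last d) = k, (w i : ℂ) * ∏ j : Fin d, z j.castSucc ^ i j.castSucc

variable (S w) in
/-- The total weight of the steps with last coordinate `k`, that is, the value of `lastCoeff S w k`
at `(1,…,1)`; the cases `k = -1, 0, 1` are the paper's `A(1)`, `Q(1)` and `B(1)`. -/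
def lastWeight (k : ℤ) : ℝ :=
  ∑ i ∈ S with i (Fin.last d) = k, w i

lemma lastWeight_nonneg (hw : ∀ i ∈ S, 0 ≤ w i) (k : ℤ) : 0 ≤ lastWeight S w k :=
  Finset.sum_nonneg fun i hi => hw i (Finset.mem_filter.1 hi).1

lemma lastWeight_pos (hw : ∀ i ∈ S, 0 < w i) {k : ℤ} (hk : ∃ i ∈ S, i (Fin.last d) = k) :
    0 < lastWeight S w k :=
  Finset.sum_pos (fun i hi => hw i (Finset.mem_filter.1 hi).1)
    (hk.imp fun _ hi => Finset.mem_filter.2 hi)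

lemma sum_lastWeight_le_S1 (hw : ∀ i ∈ S, 0 ≤ w i) (K : Finset ℤ) :
    ∑ k ∈ K, lastWeight S w k ≤ S1 d S w :=
  Finset.sum_fiberwise_le_sum_of_sum_fiber_nonneg fun k _ => lastWeight_nonneg hw k

lemma norm_prod_mul_lastCoeff_le (hstep : ∀ i ∈ S, ∀ j : Fin d, -1 ≤ i j.castSucc)
    (hw : ∀ i ∈ S, 0 ≤ w i) {z : Fin (d + 1) → ℂ} (hz : ∀ j, ‖z j‖ ≤ 1) (k : ℤ) :
    ‖(∏ j, z j) * lastCoeff S w k z‖ ≤ lastWeight S w k := by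
  simp_rw [lastCoeff, Finset.mul_sum, mul_left_comm, ← Complex.real_smul]
  refine norm_sum_smul_le_sum (fun i hi => hw i (Finset.mem_filter.1 hi).1) fun i hi => ?_
  rw [Fin.prod_univ_castSucc, mul_right_comm, norm_mul]
  exact mul_le_one₀
    (norm_prod_mul_prod_zpow_le_one (fun j _ => hz j.castSucc)
      fun j _ => hstep i (Finset.mem_filter.1 hi).1 j)
    (norm_nonneg _) (hz (Fin.last d))

theorem H3_ne_zero (hstep : ∀ i ∈ S, ∀ j : Fin d, -1 ≤ i j.castSucc) (hw : ∀ i ∈ S, 0 ≤ w i)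
    (hB : 0 < lastWeight S w 1) {z : Fin (d + 1) → ℂ} {t : ℂ} (hz : ∀ j, ‖z j‖ ≤ 1)
    (ht : ‖t‖ ≤ 1 / S1 d S w) :
    1 - t * (∏ j, z j) * (QC d S w z + z (Fin.last d) * AC d S w z) ≠ 0 := by
  have hQ : ‖(∏ j, z j) * QC d S w z‖ ≤ lastWeight S w 0 :=
    norm_prod_mul_lastCoeff_le hstep hw hz 0
  have hA : ‖(∏ j, z j) * AC d S w z‖ ≤ lastWeight S w (-1) :=
    norm_prod_mul_lastCoeff_le hstep hw hz (-1)
  have hS : lastWeight S w 0 + lastWeight S w (-1) + lastWeight S w 1 ≤ S1 d S w := by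
    simpa [add_assoc] using sum_lastWeight_le_S1 hw {0, -1, 1}
  rw [mul_assoc]
  refine one_sub_mul_ne_zero_of_norm_lt ht ?_
  calc
    ‖(∏ j, z j) * (QC d S w z + z (Fin.last d) * AC d S w z)‖
      = ‖(∏ j, z j) * QC d S w z + z (Fin.last d) * ((∏ j, z j) * AC d S w z)‖ := by
        rw [mul_add, mul_left_comm]
    _ ≤ ‖(∏ j, z j) * QC d S w z‖ + ‖z (Fin.last d)‖ * ‖(∏ j, z j) * AC d S w z‖ := by
        rw [← norm_mul]
        exact norm_add_le _ _
    _ ≤ lastWeight S w 0 + lastWeight S w (-1) :=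
        add_le_add hQ ((mul_le_of_le_one_left (norm_nonneg _) (hz _)).trans hA)
    _ < S1 d S w := by linarith

lemma SC_eq_lastCoeff_mul_add (z : Fin (d + 1) → ℂ) (k : ℤ) :
    SC d S w z = lastCoeff S w k z * z (Fin.last d) ^ k +
      ∑ i ∈ S with ¬ i (Fin.last d) = k, (w i : ℂ) * ∏ j, z j ^ i j := by
  rw [SC, ← Finset.sum_filter_add_sum_filter_not S (fun i => i (Fin.last d) = k), lastCoeff,
    Finset.sum_mul]
  congr 1
  refine Finset.sum_congr rfl fun i hi => ?_
  rw [Fin.prod_univ_castSucc, (Finset.mem_filter.1 hi).2, mul_assoc]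

lemma norm_SC_le_of_norm_eq_one (hw : ∀ i ∈ S, 0 ≤ w i) {z : Fin (d + 1) → ℂ}
    (hz : ∀ j, ‖z j‖ = 1) (k : ℤ) :
    ‖SC d S w z‖ ≤ ‖lastCoeff S w k z‖ + (S1 d S w - lastWeight S w k) := by
  have hrest : ‖∑ i ∈ S with ¬ i (Fin.last d) = k, (w i : ℂ) * ∏ j, z j ^ i j‖ ≤
      ∑ i ∈ S with ¬ i (Fin.last d) = k, w i := by
    simp_rw [← Complex.real_smul]
    exact norm_sum_smul_le_sum (fun i hi => hw i (Finset.mem_filter.1 hi).1)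
      fun i _ => by simp [norm_prod, norm_zpow, hz]
  have hsplit : S1 d S w - lastWeight S w k = ∑ i ∈ S with ¬ i (Fin.last d) = k, w i :=
    sub_eq_of_eq_add' (Finset.sum_filter_add_sum_filter_not S _ w).symm
  rw [SC_eq_lastCoeff_mul_add z k, hsplit]
  refine (norm_add_le _ _).trans (add_le_add ?_ hrest)
  rw [norm_mul, norm_zpow, hz, one_zpow, mul_one]

lemma lastCoeff_ne_zero_of_norm_SC_eq (hw : ∀ i ∈ S, 0 ≤ w i) {k : ℤ}
    (hk : 0 < lastWeight S w k) {z : Fin (d + 1) → ℂ} (hz : ∀ j, ‖z j‖ = 1)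
    (hS : ‖SC d S w z‖ = S1 d S w) : lastCoeff S w k z ≠ 0 := by
  have hle := norm_SC_le_of_norm_eq_one hw hz k
  exact norm_pos_iff.1 (by linarith)

lemma continuousAt_lastCoeff (k : ℤ) {z : Fin (d + 1) → ℂ} (hz : ∀ j : Fin d, z j.castSucc ≠ 0) :
    ContinuousAt (lastCoeff S w k) z :=
  tendsto_finsetSum _ fun i _ => tendsto_const_nhds.mul <| tendsto_finsetProd _ fun j _ =>
    (continuousAt_apply j.castSucc z).zpow₀ (i j.castSucc) (Or.inl (hz j))

end LastCoordinate

section Arcs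

variable {d : ℕ}

lemma zOf_zero_apply (θ : Fin (d + 1) → ℝ) (j : Fin (d + 1)) :
    zOf d 0 θ j = Complex.exp (Complex.I * θ j) := by
  simp [zOf]

lemma continuous_zOf (ε : ℝ) : Continuous (zOf d ε) := by
  unfold zOf
  fun_prop

lemma norm_wOf (m : Fin (d + 1) → Fin 4) (j : Fin (d + 1)) : ‖wOf d m j‖ = 1 := by
  simp [wOf]

lemma zOf_zero_argOf (m : Fin (d + 1) → Fin 4) : zOf d 0 (argOf d m) = wOf d m := by
  funext j
  have harg : Complex.I * (argOf d m j : ℂ) = (m j : ℕ) * (π / 2 * Complex.I) := by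
    push_cast [argOf]
    ring
  rw [zOf_zero_apply, harg, Complex.exp_nat_mul, Complex.exp_pi_div_two_mul_I, wOf]

lemma box_mono (m : Fin (d + 1) → Fin 4) : Monotone (box d m) := fun _ _ h =>
  Set.pi_mono fun _ _ => Set.Ioo_subset_Ioo (sub_le_sub_left h _) (add_le_add_right h _)

lemma box_eq_ball (m : Fin (d + 1) → Fin 4) {δ : ℝ} (hδ : 0 < δ) :
    box d m δ = Metric.ball (argOf d m) δ := by
  simp only [box, ball_pi _ hδ, Real.ball_eq_Ioo]

lemma eventually_forall_mem_box (m : Fin (d + 1) → Fin 4) {p : (Fin (d + 1) → ℝ) → Prop}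
    (hp : ∀ᶠ θ in nhds (argOf d m), p θ) :
    ∀ᶠ δ in nhdsWithin (0 : ℝ) (Set.Ioi 0), ∀ θ ∈ box d m δ, p θ := by
  obtain ⟨r, hr, hball⟩ := Metric.eventually_nhds_iff_ball.1 hp
  filter_upwards [Ioo_mem_nhdsGT hr] with δ hδ θ hθ
  exact hball θ (box_eq_ball m hr ▸ box_mono m hδ.2.le hθ)

variable {S : Finset (Fin (d + 1) → ℤ)} {w : (Fin (d + 1) → ℤ) → ℝ}

lemma norm_SC_wOf_of_mem_GammaIdx {m : Fin (d + 1) → Fin 4} (hm : m ∈ GammaIdx d S w) :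
    ‖SC d S w (wOf d m)‖ = S1 d S w := by
  simpa [norm_prod, norm_wOf] using (Finset.mem_filter.1 hm).2.2

lemma lastCoeff_zOf (k : ℤ) (ε : ℝ) (θ : Fin (d + 1) → ℝ) :
    lastCoeff S w k (zOf d ε θ) = lastCoeff S w k (zOf d 0 θ) := by
  simp [lastCoeff, zOf]

lemma eventually_lastCoeff_zOf_ne_zero (hw : ∀ i ∈ S, 0 ≤ w i) {k : ℤ}
    (hk : 0 < lastWeight S w k) {m : Fin (d + 1) → Fin 4} (hm : m ∈ GammaIdx d S w) :
    ∀ᶠ θ in nhds (argOf d m), lastCoeff S w k (zOf d 0 θ) ≠ 0 := by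
  have hne : lastCoeff S w k (zOf d 0 (argOf d m)) ≠ 0 := by
    rw [zOf_zero_argOf]
    exact lastCoeff_ne_zero_of_norm_SC_eq hw hk (norm_wOf m) (norm_SC_wOf_of_mem_GammaIdx hm)
  have hcont : ContinuousAt (lastCoeff S w k) (zOf d 0 (argOf d m)) :=
    continuousAt_lastCoeff k fun j => by simp [zOf_zero_apply, Complex.exp_ne_zero]
  exact (hcont.comp (continuous_zOf 0).continuousAt).eventually_ne hne

theorem exists_forall_mem_box_lastCoeff_ne_zero (hw : ∀ i ∈ S, 0 ≤ w i) {k : ℤ}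
    (hk : 0 < lastWeight S w k) :
    ∃ δ₀ > 0, ∀ m ∈ GammaIdx d S w, ∀ θ ∈ box d m δ₀, ∀ ε : ℝ,
      lastCoeff S w k (zOf d ε θ) ≠ 0 := by
  have hall : ∀ᶠ δ in nhdsWithin (0 : ℝ) (Set.Ioi 0), ∀ m ∈ GammaIdx d S w, ∀ θ ∈ box d m δ,
      lastCoeff S w k (zOf d 0 θ) ≠ 0 :=
    (Filter.eventually_all_finset _).2 fun m hm =>
      eventually_forall_mem_box m (eventually_lastCoeff_zOf_ne_zero hw hk hm)
  obtain ⟨δ₀, hne, hδ₀⟩ := (hall.and self_mem_nhdsWithin).exists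
  exact ⟨δ₀, hδ₀, fun m hm θ hθ ε => lastCoeff_zOf k ε θ ▸ hne m hm θ hθ⟩

end Arcs

end ZeroDrift

theorem H3_nonvanishing_and_B_nonvanishing_general
    {d : ℕ} {S : Finset (Fin (d + 1) → ℤ)} {w : (Fin (d + 1) → ℤ) → ℝ}
    (hstep : ∀ i ∈ S, ∀ j : Fin d, -1 ≤ i j.castSucc) (hw : ∀ i ∈ S, 0 ≤ w i)
    (hB : 0 < ZeroDrift.lastWeight S w 1) :
    (∀ (z : Fin (d + 1) → ℂ) (t : ℂ),
        (∀ j, ‖z j‖ ≤ 1) → ‖t‖ ≤ 1 / ZeroDrift.S1 d S w →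
        1 - t * (∏ j, z j) *
            (ZeroDrift.QC d S w z + z (Fin.last d) * ZeroDrift.AC d S w z) ≠ 0) ∧
    (∃ δ₀ > 0, ∀ m ∈ ZeroDrift.GammaIdx d S w, ∀ θ ∈ ZeroDrift.box d m δ₀, ∀ ε : ℝ,
      ZeroDrift.BC d S w (ZeroDrift.zOf d ε θ) ≠ 0) :=
  ⟨fun _ _ hz ht => ZeroDrift.H3_ne_zero hstep hw hB hz ht,
    ZeroDrift.exists_forall_mem_box_lastCoeff_ne_zero hw hB⟩

/-- Lemma: (i) the factor `H_3(z,t) = 1 - t z_1⋯z_{d+1}(Q(ẑ) + z_{d+1} A(ẑ))` does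
not vanish for `|z_j| ≤ 1` and `|t| ≤ 1/S(1)`; (ii) for sufficiently small `δ, ε`,
`B(ẑ) ≠ 0` on each `N_w`, `w ∈ Γ`. -/
theorem H3_nonvanishing_and_B_nonvanishing
    (d : ℕ) (S : Finset (Fin (d + 1) → ℤ)) (w : (Fin (d + 1) → ℤ) → ℝ)
    (hstep : ∀ i ∈ S, (∀ j, i j = -1 ∨ i j = 0 ∨ i j = 1) ∧ i ≠ 0)
    (hw : ∀ i ∈ S, 0 < w i)
    (hsym : ∀ k : Fin d, SymmetricAxis (d + 1) S w (Fin.castSucc k))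
    (hfwd : ∀ k : Fin (d + 1), ∃ i ∈ S, i k = 1)
    (hbwd : ∀ k : Fin (d + 1), ∃ i ∈ S, i k = -1)
    (hzero : (∑ i ∈ S.filter fun i => i (Fin.last d) = -1, w i)
        = ∑ i ∈ S.filter fun i => i (Fin.last d) = 1, w i)
    :
    (∀ (z : Fin (d + 1) → ℂ) (t : ℂ),
        (∀ j, ‖z j‖ ≤ 1) → ‖t‖ ≤ 1 / ZeroDrift.S1 d S w →
        1 - t * (∏ j, z j) *
            (ZeroDrift.QC d S w z + z (Fin.last d) * ZeroDrift.AC d S w z) ≠ 0) ∧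
    (∃ δ₀ ε₀ : ℝ, 0 < δ₀ ∧ 0 < ε₀ ∧
      ∀ δ ε : ℝ, 0 < δ → δ < δ₀ → 0 < ε → ε < ε₀ →
        ∀ m ∈ ZeroDrift.GammaIdx d S w, ∀ θ ∈ ZeroDrift.box d m δ,
          ZeroDrift.BC d S w (ZeroDrift.zOf d ε θ) ≠ 0) := by
  obtain ⟨hH₃, δ₀, hδ₀, hne⟩ := H3_nonvanishing_and_B_nonvanishing_general
    (fun i hi j => by have := (hstep i hi).1 j.castSucc; lia)
    (fun i hi => (hw i hi).le) (ZeroDrift.lastWeight_pos hw (hfwd _))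
  exact ⟨hH₃, δ₀, 1, hδ₀, one_pos, fun δ ε _ hδ _ _ m hm θ hθ =>
    hne m hm θ (ZeroDrift.box_mono m hδ.le hθ) ε⟩

end
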